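/- arXiv:2602.06482 — 5 statements merged into one kernel-verified Lean document; each statement's English description precedes it below -/
import Mathlib

section
/- Let s : ℝ × ℝ → ℝ, written s(θ, x), be twice continuously differentiable on ℝ × ℝ, let w : ℝ → ℝ be differentiable, and let x₁, …, xₙ ∈ ℝ. Define the empirical generalized score matching objective J(θ) = Σ_{i=1}^n [ w(xᵢ)·s(θ, xᵢ)² + 2·∂ₓ( w(x)·s(θ, x) )|_{x = xᵢ} ] and the Stein method-of-moments function λ(x, θ) = w(x)·s(θ, x)·∂_θ s(θ, x) + ∂ₓ( w(x)·∂_θ s(θ, x) ). Then for every θ ∈ ℝ, dJ/dθ (θ) = 2·Σ_{i=1}^n λ(xᵢ, θ). Consequently θ is a critical point of J if and only if Σ_{i=1}^n λ(xᵢ, θ) = 0, so the generalized score matching estimating equation coincides with the Stein method-of-moments equation obtained from g_θ(x) = w(x)·∂_θ s(θ, x). -/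
open Finset

theorem hasDerivAt_fst {E : Type*} [NormedAddCommGroup E] [NormedSpace ℝ E] (f : ℝ × ℝ → E)
    (D : ℝ × ℝ →L[ℝ] E) (a b : ℝ) (h : HasFDerivAt f D (a, b)) :
    HasDerivAt (fun u => f (u, b)) (D (1, 0)) a := by
  have hc : HasDerivAt (fun u : ℝ => (u, b)) ((1 : ℝ), (0 : ℝ)) a :=
    (hasDerivAt_id a).prodMk (hasDerivAt_const a b)
  exact HasFDerivAt.comp_hasDerivAt (l := f) (f := fun u : ℝ => (u, b)) a h hc

theorem hasDerivAt_snd {E : Type*} [NormedAddCommGroup E] [NormedSpace ℝ E] (f : ℝ × ℝ → E)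
    (D : ℝ × ℝ →L[ℝ] E) (a b : ℝ) (h : HasFDerivAt f D (a, b)) :
    HasDerivAt (fun v => f (a, v)) (D (0, 1)) b := by
  have hc : HasDerivAt (fun v : ℝ => (a, v)) ((0 : ℝ), (1 : ℝ)) b :=
    (hasDerivAt_const b a).prodMk (hasDerivAt_id b)
  exact HasFDerivAt.comp_hasDerivAt (l := f) (f := fun v : ℝ => (a, v)) b h hc

theorem apply_deriv (g : ℝ → (ℝ × ℝ →L[ℝ] ℝ)) (D : ℝ × ℝ →L[ℝ] ℝ) (a : ℝ) (v : ℝ × ℝ)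
    (h : HasDerivAt g D a) : HasDerivAt (fun u => g u v) (D v) a := by
  have := h.clm_apply (hasDerivAt_const a v)
  simpa using this

/-- Lemma 3.2: the derivative in `θ` of the empirical generalized score matching objective
`J(θ) = Σᵢ [w(xᵢ)s(θ,xᵢ)² + 2 ∂ₓ(w·s(θ,·))(xᵢ)]` equals `2 Σᵢ λ(xᵢ,θ)`, where
`λ(x,θ) = w(x)s(θ,x)∂_θ s(θ,x) + ∂ₓ(w·∂_θ s(·,x))(x)`; hence `θ` is a critical point of `J`
iff `Σᵢ λ(xᵢ,θ) = 0`. -/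
theorem score_matching_is_stein_mom
    (s : ℝ → ℝ → ℝ) (w : ℝ → ℝ) (n : ℕ) (x : Fin n → ℝ)
    (hs : ContDiff ℝ 2 (Function.uncurry s))
    (hw : Differentiable ℝ w)
    (J : ℝ → ℝ)
    (hJ : J = fun θ => ∑ i, (w (x i) * (s θ (x i)) ^ 2 +
        2 * deriv (fun y => w y * s θ y) (x i)))
    (lam : ℝ → ℝ → ℝ)
    (hlam : lam = fun t θ => w t * s θ t * deriv (fun u => s u t) θ +
        deriv (fun y => w y * deriv (fun u => s u y) θ) t) :
    ∀ θ : ℝ, deriv J θ = 2 * ∑ i, lam (x i) θ ∧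
      (deriv J θ = 0 ↔ (∑ i, lam (x i) θ) = 0) := by
  have hd : ∀ p, HasFDerivAt (Function.uncurry s) (fderiv ℝ (Function.uncurry s) p) p :=
    fun p => (hs.differentiable (by norm_num) p).hasFDerivAt
  have hd2 : ∀ p, HasFDerivAt (fderiv ℝ (Function.uncurry s))
      (fderiv ℝ (fderiv ℝ (Function.uncurry s)) p) p :=
    fun p => ((hs.fderiv_right (m := 1) (by norm_num)).differentiable (by norm_num) p).hasFDerivAt
  have h1 : ∀ θ y, HasDerivAt (fun u => s u y)
      (fderiv ℝ (Function.uncurry s) (θ, y) (1, 0)) θ :=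
    fun θ y => hasDerivAt_fst _ _ θ y (hd (θ, y))
  have h2 : ∀ θ y, HasDerivAt (fun v => s θ v)
      (fderiv ℝ (Function.uncurry s) (θ, y) (0, 1)) y :=
    fun θ y => hasDerivAt_snd _ _ θ y (hd (θ, y))
  have h21 : ∀ θ y, HasDerivAt (fun u => fderiv ℝ (Function.uncurry s) (u, y) (0, 1))
      (fderiv ℝ (fderiv ℝ (Function.uncurry s)) (θ, y) (1, 0) (0, 1)) θ := by
    intro θ y
    exact apply_deriv _ _ θ (0, 1) (hasDerivAt_fst _ _ θ y (hd2 (θ, y)))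
  have h12 : ∀ θ y, HasDerivAt (fun v => fderiv ℝ (Function.uncurry s) (θ, v) (1, 0))
      (fderiv ℝ (fderiv ℝ (Function.uncurry s)) (θ, y) (1, 0) (0, 1)) y := by
    intro θ y
    have hsym := second_derivative_symmetric hd (hd2 (θ, y)) (1, 0) (0, 1)
    rw [hsym]
    exact apply_deriv _ _ y (1, 0) (hasDerivAt_snd _ _ θ y (hd2 (θ, y)))
  have hws : ∀ θ y, deriv (fun y => w y * s θ y) y =
      deriv w y * s θ y + w y * fderiv ℝ (Function.uncurry s) (θ, y) (0, 1) :=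
    fun θ y => ((hw y).hasDerivAt.mul (h2 θ y)).deriv
  intro θ
  have key : deriv J θ = 2 * ∑ i, lam (x i) θ := by
    rw [hJ, hlam, Finset.mul_sum]
    apply HasDerivAt.deriv
    apply HasDerivAt.fun_sum
    intro i _
    simp only [hws, (h1 _ _).deriv]
    rw [((hw (x i)).hasDerivAt.fun_mul (h12 θ (x i))).deriv]
    have h := (((h1 θ (x i)).pow 2).const_mul (w (x i))).add
      ((((h1 θ (x i)).const_mul (deriv w (x i))).add
        ((h21 θ (x i)).const_mul (w (x i)))).const_mul 2)
    refine h.congr_deriv ?_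
    push_cast
    ring
  refine ⟨key, ?_⟩
  rw [key]
  simp
end

section
/- Let f : ℝ → ℝ be a strictly positive differentiable probability density with score function s(x) = f'(x)/f(x), and let s_θ : ℝ → ℝ (a model score function) and w : ℝ → ℝ (a weight function) be differentiable. Assume that x ↦ f(x)·s_θ(x)·w(x) tends to 0 as x → ±∞ and its derivative is integrable on ℝ, and that f·s²·w, f·s_θ²·w, f·s·s_θ·w, and f·(s_θ·w)' are integrable on ℝ. Then ∫_ℝ f(x)·(s(x) - s_θ(x))²·w(x) dx = ∫_ℝ f(x)·s(x)²·w(x) dx + ∫_ℝ f(x)·s_θ(x)²·w(x) dx + 2·∫_ℝ f(x)·(s_θ(x)·w(x))' dx. In particular, the weighted Fisher divergence ∫ f·(s - s_θ)²·w differs from D_w(θ) = ∫ f·s_θ²·w + 2·∫ f·(s_θ·w)' by a quantity not depending on s_θ, so the two functionals have the same minimizers over any family of model scores. -/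
open MeasureTheory Filter Topology

/-- Integration-by-parts identity converting the weighted Fisher divergence into the
computable generalized score matching objective:
`∫ f(s - s_θ)² w = ∫ f s² w + ∫ f s_θ² w + 2 ∫ f (s_θ w)'`. -/
theorem weighted_score_matching_ibp
    (f sθ w : ℝ → ℝ)
    (hfpos : ∀ x, 0 < f x)
    (hf : Differentiable ℝ f)
    (hfdens : ∫ x, f x = 1)
    (hsθ : Differentiable ℝ sθ)
    (hw : Differentiable ℝ w)
    (s : ℝ → ℝ)
    (hs : s = fun x => deriv f x / f x)
    (hlim_bot : Tendsto (fun x => f x * sθ x * w x) atBot (𝓝 0))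
    (hlim_top : Tendsto (fun x => f x * sθ x * w x) atTop (𝓝 0))
    (hint_deriv : Integrable (deriv (fun x => f x * sθ x * w x)))
    (hint1 : Integrable (fun x => f x * (s x) ^ 2 * w x))
    (hint2 : Integrable (fun x => f x * (sθ x) ^ 2 * w x))
    (hint3 : Integrable (fun x => f x * (s x * sθ x) * w x))
    (hint4 : Integrable (fun x => f x * deriv (fun y => sθ y * w y) x)) :
    ∫ x, f x * (s x - sθ x) ^ 2 * w x =
      (∫ x, f x * (s x) ^ 2 * w x) + (∫ x, f x * (sθ x) ^ 2 * w x) +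
        2 * ∫ x, f x * deriv (fun y => sθ y * w y) x := by
  have hg : Differentiable ℝ (fun y => sθ y * w y) := hsθ.mul hw
  have hfg : Differentiable ℝ (fun x => f x * sθ x * w x) := (hf.mul hsθ).mul hw
  have h0 : ∫ x, deriv (fun x => f x * sθ x * w x) x = 0 - 0 :=
    integral_of_hasDerivAt_of_tendsto (fun x => (hfg x).hasDerivAt) hint_deriv hlim_bot hlim_top
  have hd : ∀ x, deriv (fun x => f x * sθ x * w x) x =
      f x * (s x * sθ x) * w x + f x * deriv (fun y => sθ y * w y) x := by
    intro x
    have h1 : HasDerivAt (fun x => f x * (sθ x * w x))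
        (deriv f x * (sθ x * w x) + f x * deriv (fun y => sθ y * w y) x) x :=
      (hf x).hasDerivAt.mul (hg x).hasDerivAt
    have h2 : (fun x => f x * sθ x * w x) = fun x => f x * (sθ x * w x) := by
      funext y
      ring
    have h3 : f x * s x = deriv f x := by
      have := (hfpos x).ne'
      rw [hs]
      field_simp
    rw [h2, h1.deriv, ← h3]
    ring
  have hsum : (∫ x, f x * (s x * sθ x) * w x) +
      ∫ x, f x * deriv (fun y => sθ y * w y) x = 0 := by
    rw [← integral_add hint3 hint4]
    simpa only [hd, sub_zero] using h0
  have hexp : (fun x => f x * (s x - sθ x) ^ 2 * w x) = fun x =>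
      (f x * (s x) ^ 2 * w x + f x * (sθ x) ^ 2 * w x) - 2 * (f x * (s x * sθ x) * w x) := by
    funext x
    ring
  have hi : ∫ x, ((f x * (s x) ^ 2 * w x + f x * (sθ x) ^ 2 * w x) -
      2 * (f x * (s x * sθ x) * w x)) = (∫ x, f x * (s x) ^ 2 * w x) +
      (∫ x, f x * (sθ x) ^ 2 * w x) - 2 * ∫ x, f x * (s x * sθ x) * w x := by
    have h12 : Integrable (fun x => f x * (s x) ^ 2 * w x + f x * (sθ x) ^ 2 * w x) :=
      hint1.add hint2
    rw [integral_sub h12 (hint3.const_mul 2), integral_add hint1 hint2,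
      integral_const_mul]
  rw [hexp, hi]
  linarith
end

section
/- Let α, β > 0 and let μ be the Gamma(α, β) probability measure on ℝ, with density f(x) = (β^α/Γ(α))·x^{α-1}·e^{-βx} for x > 0 and 0 otherwise. Let g : ℝ → ℝ be differentiable on (0, ∞) and suppose: g(x)·f(x) → 0 as x → 0⁺ and as x → ∞; the derivative of x ↦ g(x)·f(x) is integrable on (0, ∞); and the functions x ↦ g(x)·((α-1)/x - β) and g' are μ-integrable. Then ∫ [ g(x)·((α-1)/x - β) + g'(x) ] dμ(x) = 0. -/
open MeasureTheory Filter Topology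

/-- Stein's method of moments for the Gamma(α, β) measure: if `g·f` vanishes at `0⁺` and
`∞` and suitable integrability holds, then `∫ [g(x)((α-1)/x - β) + g'(x)] dμ(x) = 0`. -/
theorem stein_mom_gamma
    (α β : ℝ) (hα : 0 < α) (hβ : 0 < β)
    (f : ℝ → ℝ)
    (hf : f = fun x => if 0 < x then
        (β ^ α / Real.Gamma α) * x ^ (α - 1) * Real.exp (-(β * x)) else 0)
    (μ : Measure ℝ)
    (hμ : μ = MeasureTheory.volume.withDensity (fun x => ENNReal.ofReal (f x)))
    (g : ℝ → ℝ)
    (hg : DifferentiableOn ℝ g (Set.Ioi 0))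
    (hlim0 : Tendsto (fun x => g x * f x) (nhdsWithin 0 (Set.Ioi 0)) (𝓝 0))
    (hlimtop : Tendsto (fun x => g x * f x) atTop (𝓝 0))
    (hint_deriv : IntegrableOn (deriv (fun x => g x * f x)) (Set.Ioi 0))
    (hint1 : Integrable (fun x => g x * ((α - 1) / x - β)) μ)
    (hint2 : Integrable (deriv g) μ) :
    ∫ x, (g x * ((α - 1) / x - β) + deriv g x) ∂μ = 0 := by
  have hf0 : ∀ x, 0 ≤ f x := by
    intro x
    have := Real.Gamma_pos_of_pos hα
    simp only [hf]
    split_ifs <;> positivity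
  have hfm : Measurable f := by
    rw [hf]
    refine Measurable.ite measurableSet_Ioi ?_ measurable_const
    fun_prop
  have hfneg : ∀ x, x ≤ 0 → f x = 0 := by
    intro x hx
    simp only [hf]
    rw [if_neg (not_lt.mpr hx)]
  have hfd : ∀ x, 0 < x → HasDerivAt f (f x * ((α - 1) / x - β)) x := by
    intro x hx
    have h1 : HasDerivAt (fun x : ℝ => x ^ (α - 1)) ((α - 1) * x ^ (α - 1 - 1)) x :=
      Real.hasDerivAt_rpow_const (Or.inl hx.ne')
    have h2 : HasDerivAt (fun x : ℝ => Real.exp (-(β * x)))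
        (Real.exp (-(β * x)) * (-(β * 1))) x :=
      (((hasDerivAt_id x).const_mul β).neg).exp
    have h3 := (h1.const_mul (β ^ α / Real.Gamma α)).mul h2
    have h4 : f =ᶠ[𝓝 x] fun x => (β ^ α / Real.Gamma α) * x ^ (α - 1) *
        Real.exp (-(β * x)) := by
      filter_upwards [Ioi_mem_nhds hx] with y hy
      simp only [hf]
      rw [if_pos (Set.mem_Ioi.mp hy)]
    refine (h3.congr_of_eventuallyEq h4).congr_deriv ?_
    rw [h4.eq_of_nhds, Real.rpow_sub_one hx.ne' (α - 1)]
    field_simp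
    ring
  have hd : ∀ x ∈ Set.Ioi (0 : ℝ), HasDerivAt (fun x => g x * f x)
      (f x * (g x * ((α - 1) / x - β) + deriv g x)) x := by
    intro x hx
    have h1 := ((hg x hx).differentiableAt (Ioi_mem_nhds hx)).hasDerivAt
    refine (h1.mul (hfd x hx)).congr_deriv ?_
    ring
  have hcont : ContinuousWithinAt (fun x => g x * f x) (Set.Ici 0) 0 := by
    rw [← continuousWithinAt_Ioi_iff_Ici]
    unfold ContinuousWithinAt
    simpa [hfneg 0 le_rfl] using hlim0
  have key := integral_Ioi_of_hasDerivAt_of_tendsto hcont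
    (fun x hx => (hd x hx).differentiableAt.hasDerivAt) hint_deriv hlimtop
  rw [hμ, integral_withDensity_eq_integral_toReal_smul (by fun_prop)
    (ae_of_all _ fun x => ENNReal.ofReal_lt_top)]
  simp only [ENNReal.toReal_ofReal (hf0 _), smul_eq_mul]
  rw [← setIntegral_eq_integral_of_forall_compl_eq_zero (s := Set.Ioi (0 : ℝ))
    (fun x hx => by rw [hfneg x (not_lt.mp hx), zero_mul])]
  rw [← setIntegral_congr_fun measurableSet_Ioi (fun x hx => (hd x hx).deriv), key]
  simp [hfneg 0 le_rfl]
end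

section
/- Let g : ℝ → ℝ be a bijection with inverse h, where h is differentiable with everywhere positive derivative h', and h' is differentiable. Let f, f_θ : ℝ → ℝ be strictly positive differentiable probability densities, and define the transformed densities f_Y(y) = f(h(y))·h'(y) and f_{Y,θ}(y) = f_θ(h(y))·h'(y). Write s = (log f)', s_θ = (log f_θ)', s_Y = (log f_Y)', s_{Y,θ} = (log f_{Y,θ})' for the score functions. Then: (i) for every y, s_Y(y) - s_{Y,θ}(y) = ( s(h(y)) - s_θ(h(y)) )·h'(y); and (ii) ∫_ℝ f_Y(y)·( s_Y(y) - s_{Y,θ}(y) )² dy = ∫_ℝ f(x)·( s(x) - s_θ(x) )²·w(x) dx with weight w(x) = h'(g(x))², where both sides are Lebesgue integrals of nonnegative functions (possibly infinite). That is, the unweighted Fisher divergence between the transformed densities equals the weighted Fisher divergence between the original densities. -/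
open MeasureTheory

/-- Score of a transformed density. -/
lemma score_transform (h : ℝ → ℝ) (hh : Differentiable ℝ h)
    (hpos : ∀ y, 0 < deriv h y) (hd : Differentiable ℝ (deriv h))
    (f : ℝ → ℝ) (fpos : ∀ x, 0 < f x) (hf : Differentiable ℝ f) (y : ℝ) :
    deriv (fun y => Real.log (f (h y) * deriv h y)) y =
      deriv (fun x => Real.log (f x)) (h y) * deriv h y + deriv (deriv h) y / deriv h y := by
  have e : (fun y => Real.log (f (h y) * deriv h y)) =
      fun y => Real.log (f (h y)) + Real.log (deriv h y) := by
    funext z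
    exact Real.log_mul (fpos _).ne' (hpos z).ne'
  have h1 : HasDerivAt (fun x => Real.log (f x)) (deriv (fun x => Real.log (f x)) (h y)) (h y) :=
    ((hf (h y)).log (fpos _).ne').hasDerivAt
  have h2 := h1.comp y (hh y).hasDerivAt
  have h3 := (hd y).hasDerivAt.log (hpos y).ne'
  rw [e]
  exact (h2.add h3).deriv

/-- Generalized score matching arises from ordinary score matching by a change of
variables: with `Y = g(X)`, `h = g⁻¹` increasing, the scores of the transformed densities
satisfy `s_Y - s_{Y,θ} = (s∘h - s_θ∘h)·h'`, and the unweighted Fisher divergence between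
the transformed densities equals the weighted Fisher divergence between the originals with
weight `w(x) = h'(g(x))²`. -/
theorem score_matching_change_of_variables
    (g h : ℝ → ℝ)
    (hgh : Function.LeftInverse h g) (hhg : Function.RightInverse h g)
    (hh : Differentiable ℝ h)
    (hh'pos : ∀ y, 0 < deriv h y)
    (hh'diff : Differentiable ℝ (deriv h))
    (f fθ : ℝ → ℝ)
    (hfpos : ∀ x, 0 < f x) (hfθpos : ∀ x, 0 < fθ x)
    (hf : Differentiable ℝ f) (hfθ : Differentiable ℝ fθ)
    (hfdens : ∫ x, f x = 1) (hfθdens : ∫ x, fθ x = 1)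
    (fY fYθ : ℝ → ℝ)
    (hfY : fY = fun y => f (h y) * deriv h y)
    (hfYθ : fYθ = fun y => fθ (h y) * deriv h y)
    (s sθ sY sYθ : ℝ → ℝ)
    (hs : s = deriv (fun x => Real.log (f x)))
    (hsθ : sθ = deriv (fun x => Real.log (fθ x)))
    (hsY : sY = deriv (fun y => Real.log (fY y)))
    (hsYθ : sYθ = deriv (fun y => Real.log (fYθ y))) :
    (∀ y : ℝ, sY y - sYθ y = (s (h y) - sθ (h y)) * deriv h y) ∧
    (∫⁻ y : ℝ, ENNReal.ofReal (fY y * (sY y - sYθ y) ^ 2)) =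
      (∫⁻ x : ℝ, ENNReal.ofReal (f x * (s x - sθ x) ^ 2 * (deriv h (g x)) ^ 2)) := by
  have key : ∀ y : ℝ, sY y - sYθ y = (s (h y) - sθ (h y)) * deriv h y := by
    intro y
    rw [hsY, hsYθ, hs, hsθ, hfY, hfYθ]
    have a := score_transform h hh hh'pos hh'diff f hfpos hf y
    have b := score_transform h hh hh'pos hh'diff fθ hfθpos hfθ y
    simp only [a, b]
    ring
  refine ⟨key, ?_⟩
  have cv := lintegral_image_eq_lintegral_abs_deriv_mul (s := Set.univ) (f := h) (f' := deriv h)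
    MeasurableSet.univ (fun x _ => (hh x).hasDerivAt.hasDerivWithinAt)
    (hhg.injective.injOn)
    (fun x => ENNReal.ofReal (f x * (s x - sθ x) ^ 2 * (deriv h (g x)) ^ 2))
  rw [Set.image_univ, hgh.surjective.range_eq, Measure.restrict_univ] at cv
  rw [cv]
  refine lintegral_congr fun y => ?_
  rw [← ENNReal.ofReal_mul (abs_nonneg _), abs_of_pos (hh'pos y), key, hhg y, hfY]
  congr 1
  ring
end

section
/- Consider the two-parameter Gamma score s_θ(x) = θ₁/x - θ₂ (for the Gamma(α, β) model with θ₁ = α - 1, θ₂ = β), a differentiable weight w : ℝ → ℝ, and data x₁, …, xₙ > 0. Define the moment functions λ₁(θ, x) = (w(x)/x)·(θ₁/x - θ₂) + d/dx( w(x)/x ) and λ₂(θ, x) = -w(x)·(θ₁/x - θ₂) - w'(x), and the averages Ā₁ = n⁻¹ Σᵢ [ w'(xᵢ)/xᵢ - w(xᵢ)/xᵢ² ], Ā₂ = -n⁻¹ Σᵢ w'(xᵢ), B̄₁₁ = -n⁻¹ Σᵢ w(xᵢ)/xᵢ², B̄₁₂ = B̄₂₁ = n⁻¹ Σᵢ w(xᵢ)/xᵢ,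 B̄₂₂ = -n⁻¹ Σᵢ w(xᵢ). If B̄₁₁·B̄₂₂ - B̄₁₂·B̄₂₁ ≠ 0, then θ̂ = (θ̂₁, θ̂₂) with θ̂₁ = (B̄₂₂·Ā₁ - B̄₁₂·Ā₂)/(B̄₁₁·B̄₂₂ - B̄₁₂·B̄₂₁) and θ̂₂ = (B̄₁₁·Ā₂ - B̄₂₁·Ā₁)/(B̄₁₁·B̄₂₂ - B̄₁₂·B̄₂₁) is the unique θ ∈ ℝ² satisfying Σᵢ λ₁(θ, xᵢ) = 0 and Σᵢ λ₂(θ, xᵢ) = 0. -/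
open Finset

/-- The explicit two-parameter Gamma estimator `(α̂-1, β̂) = B̄⁻¹Ā` of Section 5.2:
with the moment functions `λ₁, λ₂` built from the score `s_θ(x) = θ₁/x - θ₂` and weight
`w`, if the determinant `B̄₁₁B̄₂₂ - B̄₁₂B̄₂₁` is nonzero, then the displayed `θ̂` is the
unique solution of `Σᵢ λ₁(θ,xᵢ) = 0` and `Σᵢ λ₂(θ,xᵢ) = 0`. -/
theorem two_param_gamma_estimator
    (w : ℝ → ℝ) (hw : Differentiable ℝ w)
    (n : ℕ) (hn : 1 ≤ n) (x : Fin n → ℝ) (hx : ∀ i, 0 < x i)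
    (lam1 lam2 : ℝ × ℝ → ℝ → ℝ)
    (hlam1 : lam1 = fun θ t => (w t / t) * (θ.1 / t - θ.2) + deriv (fun y => w y / y) t)
    (hlam2 : lam2 = fun θ t => -(w t) * (θ.1 / t - θ.2) - deriv w t)
    (A1 A2 B11 B12 B21 B22 : ℝ)
    (hA1 : A1 = (n : ℝ)⁻¹ * ∑ i, (deriv w (x i) / x i - w (x i) / (x i) ^ 2))
    (hA2 : A2 = -((n : ℝ)⁻¹ * ∑ i, deriv w (x i)))
    (hB11 : B11 = -((n : ℝ)⁻¹ * ∑ i, w (x i) / (x i) ^ 2))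
    (hB12 : B12 = (n : ℝ)⁻¹ * ∑ i, w (x i) / x i)
    (hB21 : B21 = B12)
    (hB22 : B22 = -((n : ℝ)⁻¹ * ∑ i, w (x i)))
    (hdet : B11 * B22 - B12 * B21 ≠ 0)
    (θhat : ℝ × ℝ)
    (hθhat : θhat = ((B22 * A1 - B12 * A2) / (B11 * B22 - B12 * B21),
                     (B11 * A2 - B21 * A1) / (B11 * B22 - B12 * B21))) :
    ((∑ i, lam1 θhat (x i)) = 0 ∧ (∑ i, lam2 θhat (x i)) = 0) ∧
      ∀ θ : ℝ × ℝ, (∑ i, lam1 θ (x i)) = 0 → (∑ i, lam2 θ (x i)) = 0 → θ = θhat := by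
  have hn0 : (n : ℝ) ≠ 0 := by
    have : 0 < n := hn
    positivity
  have e1 : ∀ θ : ℝ × ℝ, ∑ i, lam1 θ (x i) = n * (A1 - (B11 * θ.1 + B12 * θ.2)) := by
    intro θ
    have hp : ∀ i, lam1 θ (x i) = (deriv w (x i) / x i - w (x i) / (x i) ^ 2)
        + (w (x i) / (x i) ^ 2) * θ.1 - (w (x i) / x i) * θ.2 := by
      intro i
      have hxi : x i ≠ 0 := (hx i).ne'
      have hd : deriv (fun y => w y / y) (x i)
          = (deriv w (x i) * x i - w (x i) * 1) / (x i) ^ 2 :=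
        ((hw (x i)).hasDerivAt.div (hasDerivAt_id (x i)) hxi).deriv
      rw [hlam1]
      simp only [hd]
      field_simp
      ring
    simp only [hp]
    rw [Finset.sum_sub_distrib, Finset.sum_add_distrib, ← Finset.sum_mul, ← Finset.sum_mul,
      hA1, hB11, hB12]
    field_simp
    ring
  have e2 : ∀ θ : ℝ × ℝ, ∑ i, lam2 θ (x i) = n * (A2 - (B21 * θ.1 + B22 * θ.2)) := by
    intro θ
    have hp : ∀ i, lam2 θ (x i) = w (x i) * θ.2 - (w (x i) / x i) * θ.1 - deriv w (x i) := by
      intro i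
      rw [hlam2]
      ring
    simp only [hp]
    rw [Finset.sum_sub_distrib, Finset.sum_sub_distrib, ← Finset.sum_mul, ← Finset.sum_mul,
      hA2, hB22, hB21, hB12]
    field_simp
    ring
  clear hA1 hA2 hB11 hB12 hB21 hB22 hlam1 hlam2
  refine ⟨⟨?_, ?_⟩, ?_⟩
  · rw [e1, hθhat]
    have hD := mul_inv_cancel₀ hdet
    simp only [div_eq_mul_inv]
    linear_combination (-(n * A1)) * hD
  · rw [e2, hθhat]
    have hD := mul_inv_cancel₀ hdet
    simp only [div_eq_mul_inv]
    linear_combination (-(n * A2)) * hD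
  · intro θ h1 h2
    rw [e1] at h1
    rw [e2] at h2
    have h1' := (mul_eq_zero.mp h1).resolve_left hn0
    have h2' := (mul_eq_zero.mp h2).resolve_left hn0
    rw [hθhat]
    ext
    · rw [eq_div_iff hdet]
      linear_combination B12 * h2' - B22 * h1'
    · rw [eq_div_iff hdet]
      linear_combination B21 * h1' - B11 * h2'
end
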